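/- arXiv:math/0502183 — 6 statements merged into one kernel-verified Lean document; each statement's English description precedes it below -/
import Mathlib

section
/- Let G be a finite group and let ℤ → T be a G-Galois extension of commutative rings. If T is connected, i.e. 0 ≠ 1 in T and the only idempotent elements of T are 0 and 1, then G is the trivial group (G has exactly one element) and the unique ring homomorphism ℤ → T is bijective. -/
/-!
Write `h (∑ xᵢ ⊗ yᵢ) = δ₁`, the indicator of `1 ∈ G`, so that `∑ xᵢ * g • yᵢ = δ_{g,1}`.

* Since `t = ∑ tr (t * yᵢ) * xᵢ` with `tr t = ∑ g • t ∈ T^G = ℤ`, the `xᵢ` generate `T` as an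
  abelian group (`finite_of_galois`).
* The element `∑ xᵢ ⊗ yᵢ` is a separability idempotent, so `T` is unramified over `ℤ`
  (`formallyUnramified_of_galois`).
* Let `P` be a prime of `T` lying over `0`. Then `T ⧸ P` is a domain, finite and unramified over
  `ℤ`, so it is `ℤ` by Minkowski's theorem
  (`bijective_algebraMap_int_of_surjective`). This gives a retraction `ε : T → ℤ`
  (`exists_ringHom_int`).
* The image `e` of `∑ xᵢ ⊗ yᵢ` under `ε ⊗ id` is an idempotent of `T` with `ε (g • e) = δ_{g,1}`.
  Taking `g = 1` shows `e ≠ 0`, hence `e = 1` as `T` is connected, and then `ε (g • e) = 1` for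
  every `g`, so `G = 1`. Finally `T = T^G = ℤ`.

The retraction `ε` makes it unnecessary to know that a connected finite étale `ℤ`-algebra is a
domain.
-/

open scoped TensorProduct

/-- A `G`-Galois extension of commutative rings: the structure map `R → T` is injective with
image exactly the fixed subring `T^G`, and the canonical map
`h : T ⊗[R] T → ∏_{g ∈ G} T`, `t₁ ⊗ t₂ ↦ (t₁ * g • t₂)_g`, is bijective. -/
def IsGaloisRingExtension (R T G : Type*) [CommRing R] [CommRing T] [Algebra R T]
    [Group G] [Finite G] [MulSemiringAction G T] : Prop :=
  Function.Injective (algebraMap R T) ∧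
  Set.range (algebraMap R T) = {t : T | ∀ g : G, g • t = t} ∧
  ∃ h : (T ⊗[R] T) →+* (G → T),
    (∀ t₁ t₂ : T, h (t₁ ⊗ₜ[R] t₂) = fun g => t₁ * g • t₂) ∧ Function.Bijective h

section Galois

variable {T G : Type*} [CommRing T] [Group G] [MulSemiringAction G T]

/-- The trace formula `t = ∑ᵢ tr (t * yᵢ) * xᵢ`, where `x = ∑ᵢ xᵢ ⊗ yᵢ` and `tr t = ∑ g • t` is an
integer, shows that the `xᵢ` generate `T`. -/
lemma finite_of_galois [Finite G]
    (hfix : Set.range (algebraMap ℤ T) = {t : T | ∀ g : G, g • t = t})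
    (h : (T ⊗[ℤ] T) →+* (G → T)) (hh : ∀ t₁ t₂ : T, h (t₁ ⊗ₜ[ℤ] t₂) = fun g => t₁ * g • t₂)
    (x : T ⊗[ℤ] T) (hx1 : h x 1 = 1) (hx : ∀ g : G, g ≠ 1 → h x g = 0) :
    Module.Finite ℤ T := by
  classical
  have := Fintype.ofFinite G
  obtain ⟨S, rfl⟩ := TensorProduct.exists_finset x
  refine ⟨⟨S.image Prod.fst, eq_top_iff.2 fun t _ => ?_⟩⟩
  have key : t = ∑ i ∈ S, (∑ g : G, g • (t * i.2)) * i.1 := by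
    calc t = ∑ g : G, g • t * h (∑ i ∈ S, i.1 ⊗ₜ[ℤ] i.2) g := by
          rw [Finset.sum_eq_single 1 (fun g _ hg => by rw [hx g hg, mul_zero]) (by simp)]
          simp [hx1]
      _ = _ := by
          simp only [map_sum, hh, Finset.sum_apply, Finset.mul_sum, Finset.sum_mul, smul_mul']
          rw [Finset.sum_comm]
          refine Finset.sum_congr rfl fun i _ => Finset.sum_congr rfl fun g _ => by ring
  rw [key]
  refine Submodule.sum_mem _ fun i hi => ?_
  obtain ⟨n, hn⟩ : (∑ g : G, g • (t * i.2)) ∈ Set.range (algebraMap ℤ T) := by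
    rw [hfix]
    intro k
    simp only [Finset.smul_sum, smul_smul]
    exact Fintype.sum_equiv (Equiv.mulLeft k) _ _ fun g => by simp
  rw [← hn, ← Algebra.smul_def]
  exact Submodule.smul_mem _ _ (Submodule.subset_span (by
    simpa using ⟨i.2, hi⟩))

/-- The element of `T ⊗ T` corresponding to the indicator of `1` is a separability idempotent. -/
lemma formallyUnramified_of_galois [Module.Finite ℤ T]
    (h : (T ⊗[ℤ] T) →+* (G → T)) (hh : ∀ t₁ t₂ : T, h (t₁ ⊗ₜ[ℤ] t₂) = fun g => t₁ * g • t₂)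
    (hinj : Function.Injective h)
    (x : T ⊗[ℤ] T) (hx1 : h x 1 = 1) (hx : ∀ g : G, g ≠ 1 → h x g = 0) :
    Algebra.FormallyUnramified ℤ T := by
  rw [Algebra.FormallyUnramified.iff_exists_tensorProduct]
  refine ⟨x, fun s => hinj ?_, ?_⟩
  · ext g
    by_cases hg : g = 1
    · subst hg
      simp [hh]
    · simp [hx g hg]
  · -- The component of `h` at `1 ∈ G` is the multiplication map.
    rw [← hx1]
    clear hx hx1
    induction x using TensorProduct.induction_on with
    | zero => simp
    | tmul a b => simp [hh]
    | add a b ha hb => simp_all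

/-- By Minkowski's theorem, a domain of characteristic zero which is a quotient of a finite
unramified `ℤ`-algebra is `ℤ`. -/
lemma bijective_algebraMap_int_of_surjective {D : Type*} [CommRing D] [IsDomain D]
    [Module.Finite ℤ T] [Algebra.FormallyUnramified ℤ T]
    (f : T →+* D) (hf : Function.Surjective f)
    (hinj : Function.Injective (algebraMap ℤ D)) : Function.Bijective (algebraMap ℤ D) := by
  have : FaithfulSMul ℤ D := (faithfulSMul_iff_algebraMap_injective ℤ D).2 hinj
  have : Module.Finite ℤ D := .of_surjective f.toIntAlgHom.toLinearMap hf
  have : Algebra.FormallyUnramified ℤ D := .of_surjective f.toIntAlgHom hf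
  have : Algebra.Unramified ℤ D := {}
  exact bijective_algebraMap_int_of_finite_of_unramified

/-- Reduction modulo a prime over `0` is a retraction of `ℤ → T`. -/
lemma exists_ringHom_int (hinj : Function.Injective (algebraMap ℤ T)) [Module.Finite ℤ T]
    [Algebra.FormallyUnramified ℤ T] : Nonempty (T →+* ℤ) := by
  obtain ⟨P, -, hP, hP0⟩ := Ideal.exists_ideal_over_prime_of_isIntegral (S := T)
    (⊥ : Ideal ℤ) (⊥ : Ideal T) ((RingHom.injective_iff_ker_eq_bot _).1 hinj).le
  have hb := bijective_algebraMap_int_of_surjective (Ideal.Quotient.mk P)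
    Ideal.Quotient.mk_surjective <| by
      rw [RingHom.injective_iff_ker_eq_bot, ← hP0]
      ext n
      rw [RingHom.mem_ker, Ideal.mem_comap, ← Ideal.Quotient.eq_zero_iff_mem]
      simp
  exact ⟨(RingEquiv.ofBijective _ hb).symm.toRingHom.comp (Ideal.Quotient.mk P)⟩

end Galois

/-- If `ℤ → T` is a `G`-Galois extension of commutative rings with `T` connected
(that is, `0 ≠ 1` and the only idempotents of `T` are `0` and `1`), then `G` is trivial
and `ℤ → T` is bijective. -/
theorem galois_extension_of_int_connected_trivial
    {T G : Type*} [CommRing T] [Group G] [Finite G] [MulSemiringAction G T]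
    (hGal : IsGaloisRingExtension ℤ T G)
    (hnt : (0 : T) ≠ 1)
    (hconn : ∀ e : T, IsIdempotentElem e → e = 0 ∨ e = 1) :
    Nat.card G = 1 ∧ Function.Bijective (algebraMap ℤ T) := by
  classical
  obtain ⟨hinj, hfix, h, hh, hbij⟩ := hGal
  obtain ⟨x, hx⟩ := hbij.2 (Pi.single 1 1)
  have hx1 : h x 1 = 1 := by simp [hx]
  have hx0 : ∀ g : G, g ≠ 1 → h x g = 0 := fun g hg => by simp [hx, hg]
  have := finite_of_galois hfix h hh x hx1 hx0
  have := formallyUnramified_of_galois h hh hbij.1 x hx1 hx0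
  obtain ⟨ε⟩ := exists_ringHom_int hinj
  have hxidem : IsIdempotentElem x := hbij.1 (by
    rw [map_mul, hx, ← Pi.single_mul, one_mul])
  let φ : T ⊗[ℤ] T →ₐ[ℤ] T := Algebra.TensorProduct.lift
    ((Algebra.ofId ℤ T).comp ε.toIntAlgHom) (AlgHom.id ℤ T) fun _ _ => Commute.all _ _
  have hφ (g : G) : ∀ z : T ⊗[ℤ] T, ε (g • φ z) = ε (h z g) := by
    intro z
    induction z using TensorProduct.induction_on with
    | zero => simp
    | tmul a b =>
      have hg : g • ((ε a : ℤ) : T) = (ε a : ℤ) := map_intCast (MulSemiringAction.toRingHom G T g) _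
      simp [hh, φ, hg]
    | add a b ha hb => simp_all
  have he : φ x = 1 := (hconn (φ x) (hxidem.map φ)).resolve_left fun h0 => by
    simpa [h0, hx1] using hφ 1 x
  have htriv (g : G) : g = 1 := by
    by_contra hg
    simpa [he, hx0 g hg] using hφ g x
  refine ⟨?_, hinj, fun t => ?_⟩
  · have : Subsingleton G := ⟨fun a b => (htriv a).trans (htriv b).symm⟩
    exact Nat.card_of_subsingleton 1
  · change t ∈ Set.range (algebraMap ℤ T)
    rw [hfix]
    intro g
    rw [htriv g, one_smul]
end

section
/- Let f : R → T be a homomorphism of commutative rings and let G be a finite group acting on T by ring automorphisms fixing f(R) pointwise. Let h : T ⊗_R T → ∏_{g ∈ G} T be the map determined by h(t₁ ⊗ t₂) = (t₁ · g(t₂))_{g ∈ G}, and let j : ⊕_{g ∈ G} T → End_R(T) be the map sending a G-indexed tuple (t_g)_{g ∈ G} to the R-linear endomorphism x ↦ Σ_{g ∈ G} t_g · g(x). Then the following are equivalent: (i) f is injective with image the fixed subring T^G and h is bijective; (ii) f is injective with image T^G, j is bijective, and T is a finitely generated projective R-module. -/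
/-!
Both conditions are equivalent to the existence of *Galois coordinates*: finite families
`x, y : Fin n → T` with `∑ i, x i * g • y i = δ_{g,1}` (given that `R` is the fixed subring).
Write `tr t = ∑ g, g • t`, which takes values in `T^G = R`. Galois coordinates give the
reconstruction formula `t = ∑ i, tr (y i * t) * x i`.

* If `h` is surjective, a preimage `∑ x i ⊗ y i` of `δ_1` provides coordinates. Then the
  functionals `tr (y i * ·)` and the `x i` form a dual basis, so `T` is finitely generated
  projective, and `c g = ∑ i, φ (x i) * g • y i` is the unique solution of `φ = ∑ g, c g * g`.
* If `j` is bijective and `T` has a dual basis `(x i, f i)`, write `f i = ∑ g, c i g * g`.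
  As `f i` has `G`-invariant values, uniqueness forces `c i g = g • c i 1`, that is,
  `f i = tr (y i * ·)` with `y i = c i 1`; comparing the coefficients of `id = ∑ i, f i * x i`
  shows that `x, y` are coordinates. The inverse of `h` is
  `c ↦ ∑ i, ∑ g, (c g * g • y i) ⊗ x i`.
-/

open scoped TensorProduct

namespace GaloisRing

open scoped Classical in
/-- Families `x, y` with `∑ i, x i * g • y i = δ_{g,1}` for all `g : G`. -/
def IsGaloisCoord (G : Type*) {T : Type*} [CommRing T] [Group G] [MulSemiringAction G T]
    {n : ℕ} (x y : Fin n → T) : Prop :=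
  ∀ g : G, ∑ i, x i * g • y i = if g = 1 then 1 else 0

section

variable {R T G : Type*} [CommRing R] [CommRing T] [Algebra R T]
    [Group G] [MulSemiringAction G T]

theorem smulCommClass
    (hfix : ∀ (g : G) (r : R), g • (algebraMap R T r) = algebraMap R T r) :
    SMulCommClass G R T :=
  ⟨fun g r t => by rw [Algebra.smul_def, smul_mul', hfix, ← Algebra.smul_def]⟩

section trace

variable [Fintype G]

theorem smul_sum_smul (σ : G) (t : T) : σ • ∑ g : G, g • t = ∑ g : G, g • t := by
  rw [Finset.smul_sum]
  exact Fintype.sum_equiv (Equiv.mulLeft σ) _ _ fun g => by simp [mul_smul]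

/-- The trace `t ↦ ∑ g, g • t`, as an `R`-linear functional when `R` is the fixed subring. -/
theorem exists_trace [SMulCommClass G R T] (hinj : Function.Injective (algebraMap R T))
    (hrange : Set.range (algebraMap R T) = {t : T | ∀ g : G, g • t = t}) :
    ∃ tr : T →ₗ[R] R, ∀ t, algebraMap R T (tr t) = ∑ g : G, g • t := by
  have key : ∀ t : T, ∃ r : R, algebraMap R T r = ∑ g : G, g • t := fun t => by
    have : (∑ g : G, g • t) ∈ Set.range (algebraMap R T) := by
      rw [hrange]; exact fun σ => smul_sum_smul σ t
    exact this
  choose tr htr using key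
  refine ⟨{ toFun := tr, map_add' := fun a b => hinj ?_, map_smul' := fun r a => hinj ?_ }, htr⟩
  · simp [htr, Finset.sum_add_distrib]
  · simp only [htr, RingHom.id_apply, smul_eq_mul, map_mul, Finset.mul_sum]
    exact Finset.sum_congr rfl fun g _ => by rw [smul_comm, Algebra.smul_def]

theorem IsGaloisCoord.reconstruct {n : ℕ} {x y : Fin n → T} (h : IsGaloisCoord G x y) (t : T) :
    ∑ i, (∑ g : G, g • (y i * t)) * x i = t := by
  classical
  calc ∑ i, (∑ g : G, g • (y i * t)) * x i
      = ∑ g : G, (∑ i, x i * g • y i) * g • t := by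
        simp only [Finset.sum_mul]
        rw [Finset.sum_comm]
        refine Finset.sum_congr rfl fun g _ => Finset.sum_congr rfl fun i _ => ?_
        rw [smul_mul']; ring
    _ = t := by simp [h _, ite_mul]

/-- Coefficients of `∑ g, c g * g` are recovered from its values at the `x i`. -/
theorem IsGaloisCoord.coeff {n : ℕ} {x y : Fin n → T} (h : IsGaloisCoord G x y)
    (c : G → T) (σ : G) : ∑ i, (∑ g : G, c g * g • x i) * σ • y i = c σ := by
  classical
  calc ∑ i, (∑ g : G, c g * g • x i) * σ • y i
      = ∑ g : G, c g * g • ∑ i, x i * (g⁻¹ * σ) • y i := by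
        simp only [Finset.sum_mul, Finset.smul_sum, Finset.mul_sum]
        rw [Finset.sum_comm]
        refine Finset.sum_congr rfl fun g _ => Finset.sum_congr rfl fun i _ => ?_
        rw [smul_mul', smul_smul, mul_inv_cancel_left, mul_assoc]
    _ = c σ := by
        simp only [h _, inv_mul_eq_one]
        simp [smul_ite]

end trace

theorem exists_tmul_sum (u : T ⊗[R] T) :
    ∃ (n : ℕ) (x y : Fin n → T), u = ∑ i, x i ⊗ₜ[R] y i := by
  obtain ⟨S, hS⟩ := TensorProduct.exists_finset u
  refine ⟨S.card, fun i => (S.equivFin.symm i).1.1, fun i => (S.equivFin.symm i).1.2, ?_⟩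
  rw [hS, ← Finset.sum_coe_sort]
  exact Fintype.sum_equiv S.equivFin _ _ fun i => by simp

/-- The canonical map `h : T ⊗[R] T → ∏ g, T`. -/
noncomputable def canonical (R T G : Type*) [CommRing R] [CommRing T] [Algebra R T]
    [Group G] [MulSemiringAction G T] [SMulCommClass G R T] : T ⊗[R] T →+* (G → T) :=
  RingHom.pi fun g : G => (Algebra.TensorProduct.productMap (AlgHom.id R T)
    (MulSemiringAction.toAlgHom R T g)).toRingHom

theorem canonical_tmul [SMulCommClass G R T] (t₁ t₂ : T) :
    canonical R T G (t₁ ⊗ₜ[R] t₂) = fun g => t₁ * g • t₂ := by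
  ext g
  change Algebra.TensorProduct.productMap (AlgHom.id R T)
    (MulSemiringAction.toAlgHom R T g) (t₁ ⊗ₜ[R] t₂) = _
  simp

theorem coord_of_surjective (h : (T ⊗[R] T) →+* (G → T))
    (hh : ∀ t₁ t₂ : T, h (t₁ ⊗ₜ[R] t₂) = fun g => t₁ * g • t₂) (hs : Function.Surjective h) :
    ∃ (n : ℕ) (x y : Fin n → T), IsGaloisCoord G x y := by
  classical
  obtain ⟨u, hu⟩ := hs fun g => if g = 1 then 1 else 0
  obtain ⟨n, x, y, rfl⟩ := exists_tmul_sum u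
  refine ⟨n, x, y, fun g => ?_⟩
  have := congrFun hu g
  simp only [map_sum, hh, Finset.sum_apply] at this
  rw [this]

variable [Fintype G]

theorem finite_projective [SMulCommClass G R T] (hinj : Function.Injective (algebraMap R T))
    (hrange : Set.range (algebraMap R T) = {t : T | ∀ g : G, g • t = t})
    {n : ℕ} {x y : Fin n → T} (h : IsGaloisCoord G x y) :
    Module.Finite R T ∧ Module.Projective R T := by
  obtain ⟨tr, htr⟩ := exists_trace (R := R) (T := T) (G := G) hinj hrange
  let p : (Fin n → R) →ₗ[R] T := Fintype.linearCombination R x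
  let s : T →ₗ[R] (Fin n → R) := LinearMap.pi fun i => tr ∘ₗ LinearMap.mulLeft R (y i)
  have hps : p ∘ₗ s = LinearMap.id := by
    ext t
    simpa [p, s, Fintype.linearCombination_apply, Algebra.smul_def, htr] using h.reconstruct t
  exact ⟨Module.Finite.of_surjective p fun t => ⟨s t, LinearMap.congr_fun hps t⟩,
    Module.Projective.of_split s p hps⟩

theorem existsUnique_coeff [SMulCommClass G R T]
    (hrange : Set.range (algebraMap R T) = {t : T | ∀ g : G, g • t = t})
    {n : ℕ} {x y : Fin n → T} (h : IsGaloisCoord G x y) (φ : T →ₗ[R] T) :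
    ∃! c : G → T, ∀ t : T, φ t = ∑ g : G, c g * g • t := by
  refine ⟨fun g => ∑ i, φ (x i) * g • y i, fun t => ?_, fun c hc => ?_⟩
  · have lin : ∀ a b : T, φ ((∑ g : G, g • a) * b) = (∑ g : G, g • a) * φ b := fun a b => by
      have : (∑ g : G, g • a) ∈ Set.range (algebraMap R T) := by
        rw [hrange]; exact fun σ => smul_sum_smul σ a
      obtain ⟨r, hr⟩ := this
      rw [← hr, ← Algebra.smul_def, ← Algebra.smul_def, map_smul]
    conv_lhs => rw [← h.reconstruct t, map_sum]
    simp only [lin]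
    simp only [Finset.sum_mul]
    rw [Finset.sum_comm]
    refine Finset.sum_congr rfl fun g _ => Finset.sum_congr rfl fun i _ => ?_
    rw [smul_mul']; ring
  · ext σ
    simp only [hc, h.coeff]

/-- Bijectivity of `j` turns a dual basis into Galois coordinates. The second clause records that
the traces `∑ g, g • (y i * t)` are the values of the dual functionals, so they lie in `R`. -/
theorem coord_of_finite_projective
    (hfix : ∀ (g : G) (r : R), g • (algebraMap R T r) = algebraMap R T r)
    (hj : ∀ φ : T →ₗ[R] T, ∃! c : G → T, ∀ x : T, φ x = ∑ g : G, c g * g • x)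
    [Module.Finite R T] [Module.Projective R T] :
    ∃ (n : ℕ) (x y : Fin n → T), IsGaloisCoord G x y ∧
      ∀ t i, ∃ r : R, algebraMap R T r = ∑ g : G, g • (y i * t) := by
  classical
  obtain ⟨n, p, s, -, -, hps⟩ := Module.Finite.exists_comp_eq_id_of_projective R T
  let x : Fin n → T := fun i => p (Pi.single i 1)
  let f : Fin n → T →ₗ[R] T := fun i => Algebra.linearMap R T ∘ₗ LinearMap.proj i ∘ₗ s
  choose c hc _ using fun i => hj (f i)
  have hf : ∀ i t, f i t = algebraMap R T (s t i) := fun i t => rfl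
  have hequiv : ∀ i (σ : G), c i σ = σ • c i 1 := fun i σ => by
    -- `σ ∘ f i = f i` has coefficients `g ↦ σ • c i (σ⁻¹ * g)`.
    have h2 : ∀ t, f i t = ∑ g : G, (σ • c i (σ⁻¹ * g)) * g • t := fun t => by
      have : σ • f i t = f i t := by rw [hf, hfix]
      rw [← this, hc i t, Finset.smul_sum]
      exact Fintype.sum_equiv (Equiv.mulLeft σ) _ _ fun g => by
        simp [smul_mul', smul_smul]
    have := congrFun ((hj (f i)).unique (hc i) h2) σ
    simpa using this
  have htr : ∀ i t, f i t = ∑ g : G, g • (c i 1 * t) := fun i t => by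
    rw [hc i t]
    exact Finset.sum_congr rfl fun g _ => by rw [hequiv, smul_mul']
  refine ⟨n, x, fun i => c i 1, fun g => ?_, fun t i => ⟨s t i, by rw [← htr, hf]⟩⟩
  have hid : ∀ t, (LinearMap.id : T →ₗ[R] T) t = ∑ g : G, (∑ i, x i * g • c i 1) * g • t := by
    intro t
    have h1 : ∑ i, f i t * x i = t := by
      have := LinearMap.congr_fun hps t
      rw [LinearMap.comp_apply, LinearMap.pi_apply_eq_sum_univ p, LinearMap.id_apply] at this
      conv_rhs => rw [← this]
      refine Finset.sum_congr rfl fun i _ => ?_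
      rw [hf, Algebra.smul_def]
      refine congrArg _ (congrArg p ?_)
      ext j
      simp [Pi.single_apply, eq_comm]
    rw [LinearMap.id_apply]
    conv_lhs => rw [← h1]
    simp only [htr, Finset.sum_mul]
    rw [Finset.sum_comm]
    refine Finset.sum_congr rfl fun g _ => Finset.sum_congr rfl fun i _ => ?_
    rw [smul_mul']; ring
  have hone : ∀ t, (LinearMap.id : T →ₗ[R] T) t = ∑ g : G, (if g = 1 then 1 else 0) * g • t := by
    intro t; simp [ite_mul]
  rw [congrFun ((hj LinearMap.id).unique hid hone) g]

theorem canonical_bijective [SMulCommClass G R T]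
    {n : ℕ} {x y : Fin n → T} (h : IsGaloisCoord G x y)
    (htr : ∀ t i, ∃ r : R, algebraMap R T r = ∑ g : G, g • (y i * t)) :
    Function.Bijective (canonical R T G) := by
  classical
  constructor
  · refine Function.LeftInverse.injective
      (g := fun c => ∑ i, ∑ g : G, (c g * g • y i) ⊗ₜ[R] x i) fun u => ?_
    induction u with
    | zero => simp
    | add a b ha hb =>
      conv_rhs => rw [← ha, ← hb]
      simp only [map_add, Pi.add_apply, add_mul, TensorProduct.add_tmul, Finset.sum_add_distrib]
    | tmul s t =>
      conv_rhs => rw [← h.reconstruct t, TensorProduct.tmul_sum]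
      refine Finset.sum_congr rfl fun i _ => ?_
      obtain ⟨r, hr⟩ := htr t i
      -- The trace lies in `R`, hence can be moved across the tensor sign.
      rw [← hr, ← Algebra.smul_def, ← TensorProduct.smul_tmul, Algebra.smul_def, hr,
        ← TensorProduct.sum_tmul, Finset.sum_mul]
      congr 1
      refine Finset.sum_congr rfl fun g _ => ?_
      rw [canonical_tmul, smul_mul']; ring
  · intro c
    refine ⟨∑ σ : G, ∑ i, (c σ * x i) ⊗ₜ[R] (σ⁻¹ • y i), ?_⟩
    ext g
    simp only [map_sum, canonical_tmul, Finset.sum_apply, smul_smul, mul_assoc, ← Finset.mul_sum,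
      h _, mul_inv_eq_one]
    simp

end

end GaloisRing

/-- Chase–Harrison–Rosenberg: for a finite group `G` acting on a commutative `R`-algebra `T`
by ring automorphisms fixing the image of `R` pointwise, the following are equivalent:
(i) `R → T` is injective with image the fixed subring and the canonical map
`h : T ⊗[R] T → ∏_{g ∈ G} T` is bijective;
(ii) `R → T` is injective with image the fixed subring, the canonical map
`j : ⊕_{g ∈ G} T → End_R(T)`, `(t_g)_g ↦ (x ↦ ∑_g t_g · g(x))`, is bijective
(expressed below by saying that every `R`-linear endomorphism of `T` is of this form for a
unique tuple `c : G → T`), and `T` is a finitely generated projective `R`-module. -/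
theorem galois_ring_extension_iff_auslander_goldman
    {R T G : Type*} [CommRing R] [CommRing T] [Algebra R T]
    [Group G] [Fintype G] [MulSemiringAction G T]
    (hfix : ∀ (g : G) (r : R), g • (algebraMap R T r) = algebraMap R T r) :
    (Function.Injective (algebraMap R T) ∧
      Set.range (algebraMap R T) = {t : T | ∀ g : G, g • t = t} ∧
      ∃ h : (T ⊗[R] T) →+* (G → T),
        (∀ t₁ t₂ : T, h (t₁ ⊗ₜ[R] t₂) = fun g => t₁ * g • t₂) ∧ Function.Bijective h) ↔
    (Function.Injective (algebraMap R T) ∧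
      Set.range (algebraMap R T) = {t : T | ∀ g : G, g • t = t} ∧
      (∀ φ : T →ₗ[R] T, ∃! c : G → T, ∀ x : T, φ x = ∑ g : G, c g * g • x) ∧
      Module.Finite R T ∧ Module.Projective R T) := by
  have := GaloisRing.smulCommClass hfix
  constructor
  · rintro ⟨hinj, hrange, h, hh, hb⟩
    obtain ⟨n, x, y, hxy⟩ := GaloisRing.coord_of_surjective h hh hb.2
    exact ⟨hinj, hrange, GaloisRing.existsUnique_coeff hrange hxy,
      GaloisRing.finite_projective hinj hrange hxy⟩
  · rintro ⟨hinj, hrange, hj, _, _⟩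
    obtain ⟨n, x, y, hxy, htr⟩ := GaloisRing.coord_of_finite_projective hfix hj
    exact ⟨hinj, hrange, GaloisRing.canonical R T G, GaloisRing.canonical_tmul,
      GaloisRing.canonical_bijective hxy htr⟩
end

section
/- If R → T is a G-Galois extension of commutative rings with G a finite group, then T is a faithfully flat R-module. -/
/-!
Surjectivity of `h : T ⊗[R] T → ∏ g, T` yields finitely many `xᵢ, yᵢ ∈ T` with
`∑ xᵢ * g • yᵢ = δ_{g,1}`. The trace `t ↦ ∑ g, g • t` takes values in `T^G = R`, giving an
`R`-linear map `τ : T → R`, and for all `t`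
`∑ᵢ τ (yᵢ * t) • xᵢ = ∑ g, (∑ᵢ xᵢ * g • yᵢ) * g • t = t`.
So `xᵢ` and `τ (yᵢ * ·)` form a finite dual basis: `T` is projective, hence flat, over `R`.
Each `t ∈ T` is a root of the monic polynomial `∏ g, (X - g • t)`, whose coefficients are fixed by
`G`, so `T` is integral over `R`. As `R → T` is moreover injective, lying over shows that
`Spec T → Spec R` is surjective, and a flat algebra with this property is faithfully flat.
-/

open scoped TensorProduct

/-- The trace `t ↦ ∑ g, g • t`, with values in the base ring when this is exactly the fixed
subring. -/
theorem exists_trace {R T G : Type*} [CommRing R] [CommRing T] [Algebra R T]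
    [Group G] [Fintype G] [MulSemiringAction G T]
    (hinj : Function.Injective (algebraMap R T))
    (hfix : Set.range (algebraMap R T) = {t : T | ∀ g : G, g • t = t}) :
    ∃ τ : T →ₗ[R] R, ∀ t, algebraMap R T (τ t) = ∑ g : G, g • t := by
  have hR (r : R) (g : G) : g • algebraMap R T r = algebraMap R T r := by
    have hr : algebraMap R T r ∈ {t : T | ∀ g : G, g • t = t} := hfix ▸ ⟨r, rfl⟩
    exact hr g
  have htr (t : T) : ∃ r : R, algebraMap R T r = ∑ g : G, g • t := by
    change (∑ g : G, g • t) ∈ Set.range (algebraMap R T)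
    rw [hfix]
    intro k
    rw [Finset.smul_sum]
    simp_rw [smul_smul]
    exact Fintype.sum_equiv (Equiv.mulLeft k) _ _ fun g => rfl
  choose τ hτ using htr
  refine ⟨{ toFun := τ, map_add' := fun a b => hinj ?_, map_smul' := fun r a => hinj ?_ }, hτ⟩
  · simp only [map_add, hτ, smul_add, Finset.sum_add_distrib]
  · simp only [smul_eq_mul, map_mul, hτ, RingHom.id_apply, Algebra.smul_def, smul_mul', hR,
      Finset.mul_sum]

/-- The elements `xᵢ, yᵢ` with `∑ xᵢ * g • yᵢ = δ_{g,1}` give the dual basis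
`xᵢ, τ (yᵢ * ·)` of `T`, where `τ` is the trace. -/
theorem IsGaloisRingExtension.projective {R T G : Type*} [CommRing R] [CommRing T] [Algebra R T]
    [Group G] [Finite G] [MulSemiringAction G T]
    (hGal : IsGaloisRingExtension R T G) :
    Module.Projective R T := by
  classical
  obtain ⟨hinj, hfix, h, hh, hbij⟩ := hGal
  cases nonempty_fintype G
  obtain ⟨τ, hτ⟩ := exists_trace hinj hfix
  obtain ⟨z, hz⟩ := hbij.2 (Pi.single 1 1)
  obtain ⟨S, rfl⟩ := TensorProduct.exists_finset z
  have hS (g : G) : ∑ p : S, p.1.1 * g • p.1.2 = if g = 1 then 1 else 0 := by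
    rw [Finset.sum_coe_sort S fun p => p.1 * g • p.2, ← Pi.single_apply, ← hz, map_sum]
    simp only [hh, Finset.sum_apply]
  refine Module.Projective.of_split (M := S → R)
    (LinearMap.pi fun p => τ ∘ₗ LinearMap.mulLeft R p.1.2)
    (Fintype.linearCombination R fun p : S => p.1.1) (LinearMap.ext fun t => ?_)
  calc ∑ p : S, τ (p.1.2 * t) • p.1.1
      = ∑ p : S, ∑ g : G, p.1.1 * g • p.1.2 * g • t := by
        refine Finset.sum_congr rfl fun p _ => ?_
        rw [Algebra.smul_def, hτ, Finset.sum_mul]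
        refine Finset.sum_congr rfl fun g _ => ?_
        rw [smul_mul']
        ring
    _ = ∑ g : G, (if g = 1 then 1 else 0) * g • t := by
        rw [Finset.sum_comm]
        simp only [← Finset.sum_mul, hS]
    _ = t := by simp

/-- If `R → T` is a `G`-Galois extension of commutative rings with `G` finite,
then `T` is a faithfully flat `R`-module. -/
theorem galois_ring_extension_faithfully_flat
    {R T G : Type*} [CommRing R] [CommRing T] [Algebra R T]
    [Group G] [Finite G] [MulSemiringAction G T]
    (hGal : IsGaloisRingExtension R T G) :
    Module.FaithfullyFlat R T := by
  have := hGal.projective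
  obtain ⟨hinj, hfix, -⟩ := hGal
  have : Algebra.IsInvariant R T G := ⟨fun t ht => by
    change t ∈ Set.range (algebraMap R T)
    rw [hfix]
    exact ht⟩
  have : Algebra.IsIntegral R T := Algebra.IsInvariant.isIntegral R T G
  have : FaithfulSMul R T := (faithfulSMul_iff_algebraMap_injective R T).mpr hinj
  exact .of_comap_surjective (Algebra.IsIntegral.comap_surjective R T)
end

section
/- If R → T is a G-Galois extension of commutative rings with G a finite group, then there exists an element c ∈ T with Σ_{g ∈ G} g(c) = 1; consequently the trace map tr : T → T^G = R, tr(t) = Σ_{g ∈ G} g(t), is a split surjective homomorphism of R-modules. -/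
/-!
Write `tr t = ∑ g, g • t`. Surjectivity of `h` gives a preimage `∑ xᵢ ⊗ yᵢ` of the indicator
function of `1 ∈ G`, that is, `∑ xᵢ * g • yᵢ` is `1` for `g = 1` and `0` otherwise. Summing against
`g • t` over `g` yields the dual basis formula `t = ∑ tr (yᵢ * t) • xᵢ`, so `T` is finitely
generated over `R` and `T = I T`, where `I` is the image of `tr`, an ideal of `R`. By Nakayama's
lemma some `r ∈ 1 + I` annihilates `T`. Since `R → T` is injective, `r = 0`, hence `1 ∈ I`: there
is `c` with `tr c = 1`, and `r ↦ r • c` splits the trace.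
-/

open scoped TensorProduct

namespace IsGaloisRingExtension

variable {R T G : Type*} [CommRing R] [CommRing T] [Algebra R T]
  [Group G] [Fintype G] [MulSemiringAction G T]

/-- The trace takes values in `T^G`, which is identified with `R`. -/
theorem exists_trace (hGal : IsGaloisRingExtension R T G) :
    ∃ tr : T →ₗ[R] R, ∀ t : T, algebraMap R T (tr t) = ∑ g : G, g • t := by
  obtain ⟨hinj, hrange, -⟩ := hGal
  have hfix : ∀ (g : G) (r : R), g • algebraMap R T r = algebraMap R T r := fun g r =>
    (hrange.subset ⟨r, rfl⟩ : ∀ g : G, _) g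
  have hinv : ∀ t : T, ∃ r : R, algebraMap R T r = ∑ g : G, g • t := fun t =>
    hrange.superset fun k => by
      rw [Finset.smul_sum]
      simp_rw [smul_smul]
      exact Equiv.sum_comp (Equiv.mulLeft k) fun g => g • t
  choose f hf using hinv
  refine ⟨{ toFun := f, map_add' := fun a b => hinj ?_, map_smul' := fun r a => hinj ?_ }, hf⟩
  · simp only [map_add, hf, smul_add, Finset.sum_add_distrib]
  · simp only [RingHom.id_apply, smul_eq_mul, map_mul, hf, Algebra.smul_def, smul_mul', hfix,
      Finset.mul_sum]

/-- The dual basis formula: the first coordinates of `S` generate `T` over `R`, with coordinate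
functions `t ↦ tr (y * t)`. -/
theorem exists_dual_basis (hGal : IsGaloisRingExtension R T G) (tr : T →ₗ[R] R)
    (htr : ∀ t : T, algebraMap R T (tr t) = ∑ g : G, g • t) :
    ∃ S : Finset (T × T), ∀ t : T, ∑ p ∈ S, tr (p.2 * t) • p.1 = t := by
  classical
  obtain ⟨-, -, h, hh, -, hsurj⟩ := hGal
  obtain ⟨z, hz⟩ := hsurj (Pi.single 1 1)
  obtain ⟨S, rfl⟩ := TensorProduct.exists_finset z
  have hS : ∀ g : G, ∑ p ∈ S, p.1 * g • p.2 = (Pi.single 1 1 : G → T) g := fun g => by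
    rw [← hz, map_sum, Finset.sum_apply]
    simp only [hh]
  refine ⟨S, fun t => ?_⟩
  calc ∑ p ∈ S, tr (p.2 * t) • p.1
      = ∑ p ∈ S, ∑ g : G, (p.1 * g • p.2) * g • t := by
        refine Finset.sum_congr rfl fun p _ => ?_
        rw [Algebra.smul_def, htr, Finset.sum_mul]
        refine Finset.sum_congr rfl fun g _ => ?_
        rw [smul_mul']
        ring
    _ = ∑ g : G, (Pi.single 1 1 : G → T) g * g • t := by
        rw [Finset.sum_comm]
        simp_rw [← Finset.sum_mul, hS]
    _ = t := by
        simp [Pi.single_apply]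

/-- Nakayama's lemma applied to `T = I T`, where `I` is the image of the trace. -/
theorem exists_trace_eq_one (hGal : IsGaloisRingExtension R T G) (tr : T →ₗ[R] R)
    (htr : ∀ t : T, algebraMap R T (tr t) = ∑ g : G, g • t) : ∃ c : T, tr c = 1 := by
  classical
  obtain ⟨S, hS⟩ := hGal.exists_dual_basis tr htr
  let I : Ideal R := LinearMap.range tr
  have hfg : (⊤ : Submodule R T).FG := by
    refine ⟨S.image Prod.fst, eq_top_iff.2 fun t _ => ?_⟩
    rw [← hS t]
    exact Submodule.sum_mem _ fun p hp => Submodule.smul_mem _ _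
      (Submodule.subset_span (Finset.mem_coe.2 (Finset.mem_image_of_mem _ hp)))
  have hle : (⊤ : Submodule R T) ≤ I • ⊤ := fun t _ => by
    rw [← hS t]
    exact Submodule.sum_mem _ fun p _ =>
      Submodule.smul_mem_smul (LinearMap.mem_range_self tr _) trivial
  obtain ⟨r, hr, hr0⟩ :=
    Submodule.exists_sub_one_mem_and_smul_eq_zero_of_fg_of_le_smul I ⊤ hfg hle
  have hr_zero : r = 0 := hGal.1 <| by
    rw [map_zero, Algebra.algebraMap_eq_smul_one]
    exact hr0 1 trivial
  obtain ⟨c, hc⟩ := hr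
  exact ⟨-c, by rw [map_neg, hc, hr_zero]; ring⟩

end IsGaloisRingExtension

/-- For a finite `G`-Galois extension `R → T` of commutative rings there is an element
`c ∈ T` with `∑_{g ∈ G} g(c) = 1`; consequently the trace `t ↦ ∑_{g ∈ G} g(t)`,
viewed as an `R`-linear map `tr : T → R` (via the identification of `R` with `T^G`),
is a split surjection of `R`-modules. -/
theorem galois_ring_extension_trace_split_surjective
    {R T G : Type*} [CommRing R] [CommRing T] [Algebra R T]
    [Group G] [Fintype G] [MulSemiringAction G T]
    (hGal : IsGaloisRingExtension R T G) :
    (∃ c : T, ∑ g : G, g • c = 1) ∧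
    ∃ tr : T →ₗ[R] R,
      (∀ t : T, algebraMap R T (tr t) = ∑ g : G, g • t) ∧
      ∃ s : R →ₗ[R] T, ∀ r : R, tr (s r) = r := by
  obtain ⟨tr, htr⟩ := hGal.exists_trace
  obtain ⟨c, hc⟩ := hGal.exists_trace_eq_one tr htr
  refine ⟨⟨c, by rw [← htr, hc, map_one]⟩, tr, htr, LinearMap.toSpanSingleton R T c, fun r => ?_⟩
  rw [LinearMap.toSpanSingleton_apply, map_smul, hc, smul_eq_mul, mul_one]
end

section
/- Let G be a finite group and let ℤ → T be a G-Galois extension of commutative rings. Then T is a finitely generated free ℤ-module of rank equal to the order of G. -/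
/-!
The indicator of `1` in `G → T` has a preimage `∑ xᵢ ⊗ yᵢ` under `h`, that is
`∑ xᵢ * g • yᵢ = δ_{g,1}`. Writing `tr t = ∑ g, g • t`, which takes values in `T^G = ℤ`, this gives
the dual-basis identity `t = ∑ xᵢ * tr (yᵢ * t)`. Hence the `xᵢ` span `T` over `ℤ`, and `T` is
torsion-free because `n • t = 0` forces the integers `tr (yᵢ * t)` to vanish when `n ≠ 0`. So `T`
is free of some finite rank `r`, nonzero because `ℤ` embeds in `T`, and comparing ranks in
`T ⊗ T ≃ (G → T)` yields `r * r = |G| * r`.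
-/

open scoped TensorProduct

/-- If `ℤ → T` is a `G`-Galois extension of commutative rings with `G` finite, then `T` is a
finitely generated free `ℤ`-module of rank equal to the order of `G`. -/
theorem galois_extension_of_int_free_of_rank_card
    {T G : Type*} [CommRing T] [Group G] [Finite G] [MulSemiringAction G T]
    (hGal : IsGaloisRingExtension ℤ T G) :
    Module.Free ℤ T ∧ Module.Finite ℤ T ∧ Module.finrank ℤ T = Nat.card G := by
  classical
  obtain ⟨hinj, hfix, h, hh, hbij⟩ := hGal
  have := Fintype.ofFinite G
  obtain ⟨z, hz⟩ := hbij.2 (Pi.single 1 1)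
  obtain ⟨S, rfl⟩ := TensorProduct.exists_finset z
  have hS : ∀ g : G, ∑ p ∈ S, p.1 * g • p.2 = if g = 1 then 1 else 0 := by
    intro g
    have := congrFun hz g
    simpa [map_sum, hh, Pi.single_apply] using this
  have htr : ∀ t : T, ∃ n : ℤ, (n : T) = ∑ g : G, g • t := by
    intro t
    have : (∑ g : G, g • t) ∈ Set.range (algebraMap ℤ T) := by
      rw [hfix]
      intro g
      rw [Finset.smul_sum]
      simp_rw [smul_smul]
      exact Fintype.sum_equiv (Equiv.mulLeft g) _ _ fun _ => rfl
    simpa using this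
  choose tr htr using htr
  have hdual : ∀ t : T, ∑ p ∈ S, p.1 * (tr (p.2 * t) : T) = t := by
    intro t
    simp_rw [htr, Finset.mul_sum, smul_mul', ← mul_assoc]
    rw [Finset.sum_comm]
    simp_rw [← Finset.sum_mul, hS]
    simp
  have hfin : Module.Finite ℤ T := by
    refine ⟨⟨S.image Prod.fst, eq_top_iff.2 fun t _ => ?_⟩⟩
    rw [← hdual t]
    refine Submodule.sum_mem _ fun p hp => ?_
    rw [mul_comm, ← zsmul_eq_mul]
    exact Submodule.smul_mem _ _ (Submodule.subset_span (Finset.mem_image_of_mem _ hp))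
  have htf : Module.IsTorsionFree ℤ T := by
    refine Module.IsTorsionFree.of_smul_eq_zero fun n t hnt => or_iff_not_imp_left.2 fun hn => ?_
    have hzero : ∀ y : T, tr (y * t) = 0 := by
      intro y
      have h0 : algebraMap ℤ T (n * tr (y * t)) = algebraMap ℤ T 0 := by
        have key : ∑ g : G, g • (y * (n • t)) = (n : T) * ∑ g : G, g • (y * t) := by
          rw [← zsmul_eq_mul, Finset.smul_sum]
          refine Finset.sum_congr rfl fun g _ => ?_
          rw [mul_smul_comm, smul_comm]
        rw [hnt] at key
        simpa [htr] using key.symm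
      exact (mul_eq_zero.1 (hinj h0)).resolve_left hn
    rw [← hdual t]
    simp [hzero]
  have hfree : Module.Free ℤ T := inferInstance
  have : Nontrivial T := hinj.nontrivial
  refine ⟨hfree, hfin, ?_⟩
  have hrank := LinearEquiv.finrank_eq
    (AddEquiv.toIntLinearEquiv (AddEquiv.ofBijective h.toAddMonoidHom hbij))
  rw [Module.finrank_pi_fintype, Finset.sum_const, Finset.card_univ, smul_eq_mul,
    ← Nat.card_eq_fintype_card] at hrank
  have hsq : Module.finrank ℤ T * Module.finrank ℤ T = Nat.card G * Module.finrank ℤ T := by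
    rw [← hrank]
    exact (Module.finrank_tensorProduct (R := ℤ) (S := ℤ) (M := T) (M' := T)).symm
  exact Nat.eq_of_mul_eq_mul_right Module.finrank_pos hsq
end

section
/- Let B be a nontrivial connected commutative ring, i.e. 0 ≠ 1 in B and the only idempotent elements of B are 0 and 1, and let G be a finite set. Then the map from the set of functions G → G to the set of B-algebra endomorphisms of ∏_{g ∈ G} B, sending a function f : G → G to the endomorphism φ ↦ φ ∘ f (where elements of ∏_{g ∈ G} B are regarded as functions φ : G → B), is a bijection. -/
/-!
Write `e i` for the indicator `Pi.single i 1`. For fixed `g`, the elements `Φ (e i) g` are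
idempotents of `B` with sum `1`, so connectedness forces one of them, say at `i = f g`, to equal `1`.
Applying `Φ` to `φ * e (f g) = φ (f g) • e (f g)` and evaluating at `g` gives `Φ φ g = φ (f g)`.
Uniqueness holds because indicators separate the points of `G` when `0 ≠ 1`.
-/

/-- If `B` is a nontrivial connected commutative ring (no idempotents besides `0` and `1`)
and `G` is a finite set, then the map sending a function `f : G → G` to the `B`-algebra
endomorphism `φ ↦ φ ∘ f` of `∏_{g ∈ G} B` is a bijection onto the set of `B`-algebra
endomorphisms: every `B`-algebra endomorphism `Φ` of `∏_{g ∈ G} B` is precomposition with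
exactly one function `f : G → G`. -/
theorem connected_ring_algHom_endo_of_product_eq_precomposition
    {B G : Type*} [CommRing B] [Finite G]
    (hnt : (0 : B) ≠ 1)
    (hconn : ∀ e : B, IsIdempotentElem e → e = 0 ∨ e = 1) :
    ∀ Φ : (G → B) →ₐ[B] (G → B),
      ∃! f : G → G, ∀ φ : G → B, Φ φ = φ ∘ f := by
  classical
  have := Fintype.ofFinite G
  intro Φ
  have key : ∀ g : G, ∃ i : G, Φ (Pi.single i 1) g = 1 := by
    intro g
    by_contra! hne
    have hzero : ∀ i : G, Φ (Pi.single i 1) g = 0 := by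
      intro i
      refine (hconn _ ?_).resolve_right (hne i)
      have hidem : (Pi.single i 1 : G → B) * Pi.single i 1 = Pi.single i 1 := by
        rw [← Pi.single_mul, one_mul]
      have h := congrFun (congrArg Φ hidem) g
      rwa [map_mul, Pi.mul_apply] at h
    have hsum : ∑ i : G, (Pi.single i 1 : G → B) = 1 :=
      Finset.univ_sum_single (1 : G → B)
    have h := congrFun (congrArg Φ hsum) g
    rw [map_sum, map_one, Finset.sum_apply, Finset.sum_eq_zero fun i _ => hzero i] at h
    exact hnt h
  choose f hf using key
  refine ⟨f, fun φ => ?_, fun f' hf' => ?_⟩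
  · funext g
    -- Multiplying by the indicator of `f g` only retains the value of `φ` at `f g`.
    have hmul : φ * Pi.single (f g) 1 = φ (f g) • (Pi.single (f g) 1 : G → B) := by
      funext j
      by_cases hj : j = f g
      · subst hj; simp
      · simp [hj]
    have h := congrFun (congrArg Φ hmul) g
    rw [map_mul, map_smul, Pi.mul_apply, Pi.smul_apply, hf g] at h
    simpa using h
  · funext g
    have h := hf g
    rw [hf' (Pi.single (f g) 1), Function.comp_apply] at h
    by_contra hne
    rw [Pi.single_eq_of_ne hne] at h
    exact hnt h
end
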